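/- Let G = (V,E) be an MPDAG and let (C_1,…,C_k) be an ordered bucket decomposition of V in G. Then for any i, j ∈ {1,…,k} with i < j, there is no DAG in [G] containing a causal path from C_j to C_i. -/

import Mathlib

open scoped Classical

namespace CausalMPDAG

/-- A partially directed graph: a directed edge relation `dir` (`dir a b` means `a → b`)
and an undirected edge relation `undir` (`a − b`). -/
structure PDGraph (V : Type*) where
  dir : V → V → Prop
  undir : V → V → Prop

namespace PDGraph

variable {V : Type*}

/-- adjacency -/
def adj (g : PDGraph V) (a b : V) : Prop :=
  g.dir a b ∨ g.dir b a ∨ g.undir a b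

/-- `g` is a partially directed acyclic graph: `undir` symmetric and irreflexive,
`dir` irreflexive, at most one edge between two nodes, and no directed cycles. -/
def IsPDAG (g : PDGraph V) : Prop :=
  (∀ a b, g.undir a b → g.undir b a) ∧
  (∀ a, ¬ g.dir a a) ∧
  (∀ a, ¬ g.undir a a) ∧
  (∀ a b, g.dir a b → ¬ g.undir a b) ∧
  (∀ a b, g.dir a b → ¬ g.dir b a) ∧
  (∀ a, ¬ Relation.TransGen g.dir a a)

/-- a DAG is a PDAG with only directed edges -/
def IsDAG (g : PDGraph V) : Prop :=
  g.IsPDAG ∧ ∀ a b, ¬ g.undir a b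

/-- Closure under Meek's orientation rules R1–R4 (no rule can orient a further
undirected edge). -/
def MeekClosed (g : PDGraph V) : Prop :=
  -- R1: a → b − c with a, c nonadjacent would orient b → c
  (∀ a b c, g.dir a b → g.undir b c → g.adj a c) ∧
  -- R2: a → b → c with a − c would orient a → c
  (∀ a b c, g.dir a b → g.dir b c → ¬ g.undir a c) ∧
  -- R3: a − b, a − c, c → b, a − d, d → b with c, d nonadjacent would orient a → b
  (∀ a b c d, g.undir a b → g.undir a c → g.dir c b → g.undir a d → g.dir d b →
    g.adj c d) ∧
  -- R4: a − b, a − c, c → d, d → b with a, d adjacent and b, c nonadjacent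
  -- would orient a → b
  (∀ a b c d, g.undir a b → g.undir a c → g.dir c d → g.dir d b → g.adj a d →
    g.adj c b)

/-- A maximally oriented PDAG: a PDAG closed under Meek's rules R1–R4. -/
def IsMPDAG (g : PDGraph V) : Prop := g.IsPDAG ∧ g.MeekClosed

/-- an unshielded collider `a → b ← c` with `a`, `c` nonadjacent -/
def UnshieldedCollider (g : PDGraph V) (a b c : V) : Prop :=
  g.dir a b ∧ g.dir c b ∧ a ≠ c ∧ ¬ g.adj a c

/-- `g.Represents d` : the DAG `d` belongs to the class `[g]` of DAGs represented by the
MPDAG `g`: `d` is a DAG with the same adjacencies and directed edges as `g` and with no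
unshielded colliders other than those of `g`. -/
def Represents (g d : PDGraph V) : Prop :=
  d.IsDAG ∧
  (∀ a b, d.adj a b ↔ g.adj a b) ∧
  (∀ a b, g.dir a b → d.dir a b) ∧
  (∀ a b c, d.UnshieldedCollider a b c → g.UnshieldedCollider a b c)

/-- `G_{X̄}` : remove all edges into `X` -/
def removeInto (g : PDGraph V) (X : Set V) : PDGraph V where
  dir a b := g.dir a b ∧ b ∉ X
  undir := g.undir

/-- `G_{Z̲}` : remove all edges out of `Z` -/
def removeOutOf (g : PDGraph V) (Z : Set V) : PDGraph V where
  dir a b := g.dir a b ∧ a ∉ Z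
  undir := g.undir

/-- induced subgraph on the node set `S` -/
def induce (g : PDGraph V) (S : Set V) : PDGraph V where
  dir a b := g.dir a b ∧ a ∈ S ∧ b ∈ S
  undir a b := g.undir a b ∧ a ∈ S ∧ b ∈ S

/-- a path: a nonempty list of distinct nodes in which successive nodes are adjacent -/
def IsPath (g : PDGraph V) (p : List V) : Prop :=
  p ≠ [] ∧ p.Nodup ∧ p.Chain' g.adj

/-- a causal (directed) path `V₀ → ⋯ → V_k` -/
def IsCausal (g : PDGraph V) (p : List V) : Prop :=
  p ≠ [] ∧ p.Nodup ∧ p.Chain' g.dir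

/-- a possibly causal path: a path `⟨V₀,…,V_k⟩` such that `g` contains no edge
`V_i ← V_j` for `i < j` -/
def IsPossiblyCausal (g : PDGraph V) (p : List V) : Prop :=
  g.IsPath p ∧ ∀ i j : Fin p.length, (i : ℕ) < (j : ℕ) → ¬ g.dir (p.get j) (p.get i)

/-- the path starts with an undirected edge -/
def StartsUndirected (g : PDGraph V) : List V → Prop
  | a :: b :: _ => g.undir a b
  | _ => False

/-- every triple of consecutive nodes on the path has nonadjacent outer nodes -/
def Unshielded (g : PDGraph V) (p : List V) : Prop :=
  ∀ (i : ℕ) (a c : V), p[i]? = some a → p[i + 2]? = some c → ¬ g.adj a c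

/-- there is a possibly causal path from `a` to `b` (possibly trivial) -/
def PossCausalConn (g : PDGraph V) (a b : V) : Prop :=
  ∃ p : List V, g.IsPossiblyCausal p ∧ p.head? = some a ∧ p.getLast? = some b

/-- possible descendants of `X` (every node is a possible descendant of itself) -/
def possDe (g : PDGraph V) (X : Set V) : Set V := {b | ∃ a ∈ X, g.PossCausalConn a b}

/-- possible ancestors of `W` (every node is a possible ancestor of itself) -/
def possAn (g : PDGraph V) (W : Set V) : Set V := {a | ∃ b ∈ W, g.PossCausalConn a b}

/-- ancestors of `Y` (via causal paths; every node is an ancestor of itself) -/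
def an (g : PDGraph V) (Y : Set V) : Set V :=
  {a | ∃ b ∈ Y, Relation.ReflTransGen g.dir a b}

/-- descendants of `X` (via causal paths; every node is a descendant of itself) -/
def de (g : PDGraph V) (X : Set V) : Set V :=
  {b | ∃ a ∈ X, Relation.ReflTransGen g.dir a b}

/-- `Pa(B,G)`: parents of nodes of `B` that lie outside `B` -/
def paSet (g : PDGraph V) (B : Set V) : Set V :=
  {a | a ∉ B ∧ ∃ b ∈ B, g.dir a b}

/-- the node at (non-endpoint) position `i` of `p` is a collider on `p` -/
def ColliderAt (g : PDGraph V) (p : List V) (i : ℕ) : Prop :=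
  0 < i ∧ ∃ a b c, p[i - 1]? = some a ∧ p[i]? = some b ∧ p[i + 1]? = some c ∧
    g.dir a b ∧ g.dir c b

/-- the node at (non-endpoint) position `i` of `p` is a definite non-collider on `p` -/
def DefNonColliderAt (g : PDGraph V) (p : List V) (i : ℕ) : Prop :=
  0 < i ∧ ∃ a b c, p[i - 1]? = some a ∧ p[i]? = some b ∧ p[i + 1]? = some c ∧
    (g.dir b a ∨ g.dir b c ∨ (g.undir a b ∧ g.undir b c ∧ ¬ g.adj a c))

/-- every non-endpoint node of the path is a collider or a definite non-collider -/
def DefiniteStatus (g : PDGraph V) (p : List V) : Prop :=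
  ∀ i : ℕ, 0 < i → i + 1 < p.length → g.ColliderAt p i ∨ g.DefNonColliderAt p i

/-- the definite status path `p` is d-connecting given `Z`: every definite non-collider
is outside `Z` and every collider has a descendant in `Z` -/
def DConn (g : PDGraph V) (Z : Set V) (p : List V) : Prop :=
  g.DefiniteStatus p ∧
  (∀ (i : ℕ) (b : V), g.DefNonColliderAt p i → p[i]? = some b → b ∉ Z) ∧
  (∀ (i : ℕ) (b : V), g.ColliderAt p i → p[i]? = some b →
    ∃ z ∈ Z, Relation.ReflTransGen g.dir b z)

/-- `X ⊥_d Y | Z` : every definite status path between `X` and `Y` is blocked given `Z` -/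
def DSep (g : PDGraph V) (X Y Z : Set V) : Prop :=
  ∀ p : List V, g.IsPath p →
    (((∃ a ∈ X, p.head? = some a) ∧ ∃ b ∈ Y, p.getLast? = some b) ∨
     ((∃ a ∈ Y, p.head? = some a) ∧ ∃ b ∈ X, p.getLast? = some b)) →
    ¬ g.DConn Z p

/-- connectedness by undirected paths -/
def uconn (g : PDGraph V) : V → V → Prop := Relation.ReflTransGen g.undir

/-- `B` is a bucket in `D`: the (nonempty) intersection of `D` with a maximal
undirected-connected node set of `g` -/
def IsBucket (g : PDGraph V) (D B : Set V) : Prop :=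
  B.Nonempty ∧ B ⊆ D ∧ (∀ a ∈ B, ∀ b ∈ B, g.uconn a b) ∧
  ∀ a ∈ B, ∀ d ∈ D, g.uconn a d → d ∈ B

/-- an ordered bucket decomposition of `D` in `g`; the output `PCO(D,G)` of the partial
causal ordering algorithm is such a decomposition -/
def IsOBD (g : PDGraph V) (D : Set V) (Bs : List (Set V)) : Prop :=
  (∀ B ∈ Bs, g.IsBucket D B) ∧
  (∀ a : V, a ∈ D ↔ ∃ i : Fin Bs.length, a ∈ Bs.get i) ∧
  List.Pairwise (fun A B => Disjoint A B) Bs ∧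
  ∀ i j : Fin Bs.length, (i : ℕ) < (j : ℕ) →
    ∀ a ∈ Bs.get i, ∀ b ∈ Bs.get j, g.adj a b → g.dir a b

end PDGraph

/-- the path is proper w.r.t. `X`: the first node is in `X` and no other node is -/
def ProperFrom {V : Type*} (X : Set V) (p : List V) : Prop :=
  (∃ a ∈ X, p.head? = some a) ∧ ∀ i : Fin p.length, 0 < (i : ℕ) → p.get i ∉ X

/-- the last node of the path lies in `Y` -/
def EndsIn {V : Type*} (Y : Set V) (p : List V) : Prop :=
  ∃ b ∈ Y, p.getLast? = some b

section Density

variable {V Val : Type*} [Fintype V] [DecidableEq V] [Fintype Val]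

/-- marginal of the (discrete) density `f` over the coordinates outside `S`,
evaluated at the values `v` on `S` -/
noncomputable def margDens (f : (V → Val) → ℝ) (S : Set V) (v : V → Val) : ℝ :=
  ∑ w : V → Val, if ∀ i ∈ S, w i = v i then f w else 0

/-- conditional density `f(a | b)` of the variables `A` given the variables `B` -/
noncomputable def condDens (f : (V → Val) → ℝ) (A B : Set V) (v : V → Val) : ℝ :=
  margDens f (A ∪ B) v / margDens f B v

/-- A family `F` of interventional densities (`F X v` is `f(v | do(x))` with the
intervention values read off `v` on `X`) is compatible with the causal DAG `d`:
the truncated factorization holds. -/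
def Compatible (d : PDGraph V) (F : Set V → (V → Val) → ℝ) : Prop :=
  ∀ (X : Set V) (v : V → Val),
    F X v = ∏ i : V, if i ∈ X then 1 else condDens (F ∅) {i} {a | d.dir a i} v

/-- the interventional family is consistent with the causal MPDAG `g`: it is compatible
with every DAG in `[g]` -/
def ConsistentFam (g : PDGraph V) (F : Set V → (V → Val) → ℝ) : Prop :=
  ∀ d : PDGraph V, g.Represents d → Compatible d F

end Density

/-- The conditional causal effect of `X` on `Y` given `Z` is identifiable in the causal
MPDAG `g`: any two positive interventional families compatible with DAGs in `[g]` whose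
observational densities agree yield the same `f(y | do(x), z)`. -/
def Identifiable (Val : Type*) [Fintype Val] {V : Type*} [Fintype V] [DecidableEq V]
    (g : PDGraph V) (X Y Z : Set V) : Prop :=
  ∀ (d₁ d₂ : PDGraph V) (F₁ F₂ : Set V → (V → Val) → ℝ),
    g.Represents d₁ → g.Represents d₂ →
    Compatible d₁ F₁ → Compatible d₂ F₂ →
    (∀ v, 0 < F₁ ∅ v) → (∀ v, 0 < F₂ ∅ v) →
    F₁ ∅ = F₂ ∅ →
    ∀ v : V → Val, condDens (F₁ X) Y (Z ∪ X) v = condDens (F₂ X) Y (Z ∪ X) v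


/-- A directed edge of a represented DAG never leads to an earlier bucket. -/
theorem PDGraph.Represents.bucket_index_le_of_dir {V : Type*} {g d : PDGraph V}
    (hd : g.Represents d) {D : Set V} {Bs : List (Set V)} (hBs : g.IsOBD D Bs)
    {m n : Fin Bs.length} {u v : V} (hu : u ∈ Bs.get m) (hv : v ∈ Bs.get n)
    (huv : d.dir u v) : m ≤ n := by
  obtain ⟨⟨⟨-, -, -, -, hasymm, -⟩, -⟩, hadj, hdir, -⟩ := hd
  by_contra! hnm
  have hvu : g.adj v u := (hadj v u).1 (Or.inr (Or.inl huv))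
  exact hasymm u v huv (hdir v u (hBs.2.2.2 n m hnm v hv u hu hvu))

/-- A causal path of a represented DAG never ends in an earlier bucket than it starts. -/
theorem PDGraph.Represents.bucket_index_le_of_transGen {V : Type*} {g d : PDGraph V}
    (hd : g.Represents d) {Bs : List (Set V)} (hBs : g.IsOBD Set.univ Bs)
    {m n : Fin Bs.length} {u v : V} (hu : u ∈ Bs.get m) (hv : v ∈ Bs.get n)
    (huv : Relation.TransGen d.dir u v) : m ≤ n := by
  induction huv generalizing n with
  | single h => exact hd.bucket_index_le_of_dir hBs hu hv h
  | @tail w _ _ h ih =>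
    obtain ⟨l, hl⟩ := (hBs.2.1 w).1 (Set.mem_univ w)
    exact (ih hl).trans (hd.bucket_index_le_of_dir hBs hl hv h)

/-- Corollary: no backward causal paths in any DAG of `[G]` among
ordered buckets. If `(C_1,…,C_k)` is an ordered bucket decomposition of the node set
of the MPDAG `G`, then for `i < j` no DAG in `[G]` contains a causal path from `C_j`
to `C_i`. -/
theorem no_backward_causal_in_represented_dag
    {V : Type*} (g : PDGraph V) (hG : g.IsMPDAG)
    (Bs : List (Set V)) (hBs : g.IsOBD Set.univ Bs)
    (i j : Fin Bs.length) (hij : (i : ℕ) < (j : ℕ)) :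
    ∀ d : PDGraph V, g.Represents d →
      ∀ a ∈ Bs.get j, ∀ b ∈ Bs.get i, ¬ Relation.TransGen d.dir a b := by
  intro d hd a ha b hb hab
  exact absurd (hd.bucket_index_le_of_transGen hBs ha hb hab) (not_le.2 hij)

end CausalMPDAG
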